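/- (Local filtering enhancement of the realignment criterion) Let L^A ∈ L(H_A) and L^B ∈ L(H_B) be linear operators such that ‖L^A σ^A (L^A)†‖_HS ≤ 1 for every density operator σ^A on H_A and ‖L^B σ^B (L^B)†‖_HS ≤ 1 for every density operator σ^B on H_B. Then for every separable state ρ on H_A ⊗ H_B: ‖(L^A ⊗ L^B) ρ (L^A ⊗ L^B)†‖_CCN ≤ 1. -/

import Mathlib

open scoped Kronecker ComplexOrder
open Matrix Finset

/-- Hilbert-Schmidt inner product on matrices. -/
noncomputable def hsInner {n : Type*} [Fintype n] (A B : Matrix n n ℂ) : ℂ :=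
  (Aᴴ * B).trace

/-- Hilbert-Schmidt norm. -/
noncomputable def hsNorm {n : Type*} [Fintype n] (A : Matrix n n ℂ) : ℝ :=
  Real.sqrt (hsInner A A).re

/-- A density operator: positive semidefinite with unit trace. -/
def IsDensity {n : Type*} [Fintype n] (ρ : Matrix n n ℂ) : Prop :=
  ρ.PosSemidef ∧ ρ.trace = 1

/-- A separable bipartite state: a convex combination of product density operators. -/
def IsSeparableState {NA NB : ℕ} (ρ : Matrix (Fin NA × Fin NB) (Fin NA × Fin NB) ℂ) : Prop :=
  ∃ (m : ℕ) (p : Fin m → ℝ)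
    (ρA : Fin m → Matrix (Fin NA) (Fin NA) ℂ) (ρB : Fin m → Matrix (Fin NB) (Fin NB) ℂ),
    (∀ i, 0 < p i) ∧ (∑ i, p i = 1) ∧ (∀ i, IsDensity (ρA i)) ∧ (∀ i, IsDensity (ρB i)) ∧
    ρ = ∑ i, (p i : ℂ) • (ρA i ⊗ₖ ρB i)

/-- The computable cross norm (CCN) on bipartite operators. -/
noncomputable def ccn {NA NB : ℕ} (C : Matrix (Fin NA × Fin NB) (Fin NA × Fin NB) ℂ) : ℝ :=
  sInf { r : ℝ | ∃ (n : ℕ) (A : Fin n → Matrix (Fin NA) (Fin NA) ℂ)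
    (B : Fin n → Matrix (Fin NB) (Fin NB) ℂ),
    C = ∑ k, A k ⊗ₖ B k ∧ r = ∑ k, hsNorm (A k) * hsNorm (B k) }

theorem hsNorm_smul_real {n : Type*} [Fintype n] (c : ℝ) (hc : 0 ≤ c) (A : Matrix n n ℂ) :
    hsNorm ((c : ℂ) • A) = c * hsNorm A := by
  unfold hsNorm hsInner
  have h : (((c : ℂ) • A)ᴴ * ((c : ℂ) • A)).trace.re = c ^ 2 * (Aᴴ * A).trace.re := by
    simp [Matrix.conjTranspose_smul, Matrix.trace_smul]
    ring
  rw [h, Real.sqrt_mul (sq_nonneg c), Real.sqrt_sq hc]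

theorem hsNorm_nonneg {n : Type*} [Fintype n] (A : Matrix n n ℂ) : 0 ≤ hsNorm A :=
  Real.sqrt_nonneg _

/-- Local filtering enhancement of the realignment criterion. -/
theorem stmt18_local_filtering {NA NB : ℕ} (hA : 2 ≤ NA) (hB : 2 ≤ NB)
    (LA : Matrix (Fin NA) (Fin NA) ℂ) (LB : Matrix (Fin NB) (Fin NB) ℂ)
    (hLA : ∀ σA : Matrix (Fin NA) (Fin NA) ℂ, IsDensity σA → hsNorm (LA * σA * LAᴴ) ≤ 1)
    (hLB : ∀ σB : Matrix (Fin NB) (Fin NB) ℂ, IsDensity σB → hsNorm (LB * σB * LBᴴ) ≤ 1)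
    (ρ : Matrix (Fin NA × Fin NB) (Fin NA × Fin NB) ℂ)
    (hsep : IsSeparableState ρ) :
    ccn ((LA ⊗ₖ LB) * ρ * (LA ⊗ₖ LB)ᴴ) ≤ 1 := by
  obtain ⟨m, p, ρA, ρB, hp, hsum, hdA, hdB, rfl⟩ := hsep
  have hle : ∑ k, hsNorm ((p k : ℂ) • (LA * ρA k * LAᴴ)) * hsNorm (LB * ρB k * LBᴴ) ≤ 1 := by
    rw [← hsum]
    refine Finset.sum_le_sum fun k _ => ?_
    rw [hsNorm_smul_real _ (hp k).le]
    have h1 := hLA _ (hdA k)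
    have h2 := hLB _ (hdB k)
    have h3 := mul_le_one₀ h1 (hsNorm_nonneg _) h2
    rw [mul_assoc]
    exact mul_le_of_le_one_right (hp k).le h3
  refine (csInf_le ?_ ?_).trans hle
  · refine ⟨0, ?_⟩
    rintro r ⟨n, A, B, -, rfl⟩
    exact Finset.sum_nonneg fun k _ => mul_nonneg (hsNorm_nonneg _) (hsNorm_nonneg _)
  · refine ⟨m, fun k => (p k : ℂ) • (LA * ρA k * LAᴴ), fun k => LB * ρB k * LBᴴ, ?_, rfl⟩
    rw [Matrix.mul_sum, Matrix.sum_mul]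
    refine Finset.sum_congr rfl fun k _ => ?_
    rw [Matrix.conjTranspose_kronecker, Matrix.mul_smul, Matrix.smul_mul,
      ← Matrix.mul_kronecker_mul, ← Matrix.mul_kronecker_mul, Matrix.smul_kronecker]
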